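/- arXiv:2010.14589 — 2 statements merged into one kernel-verified Lean document; each statement's English description precedes it below -/
import Mathlib

section
/- Let R be a real n×m matrix with orthonormal columns (RᵀR = Iₘ), and let X, Y be real m×p matrices such that XᵀY is invertible. Then (Iₙ − (RX)(RX)ᵀ)(RY)((RX)ᵀ(RY))⁻¹ = R · ((Iₘ − XXᵀ)Y(XᵀY)⁻¹). (This is the key matrix identity in the proof of Proposition 1, showing the matrix whose SVD yields the principal angles between span(RX) and span(RY) is R times the corresponding matrix for span(X) and span(Y).) -/
open Matrix

section Isometry

variable {α m n p q : Type*} [Fintype m] [Fintype n]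

theorem conjTranspose_mul_mul_mul_of_conjTranspose_mul_self_eq_one
    [Semiring α] [StarRing α] [DecidableEq m] {R : Matrix n m α} (hR : Rᴴ * R = 1)
    (X : Matrix m p α) (Y : Matrix m q α) :
    (R * X)ᴴ * (R * Y) = Xᴴ * Y := by
  calc
    (R * X)ᴴ * (R * Y) = Xᴴ * (Rᴴ * R) * Y := by
      simp only [conjTranspose_mul, Matrix.mul_assoc]
    _ = Xᴴ * Y := by rw [hR, Matrix.mul_one]

variable [Ring α] [StarRing α] [DecidableEq m] [DecidableEq n] [Fintype p]

theorem one_sub_mul_mul_conjTranspose_mul_mul_of_conjTranspose_mul_self_eq_one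
    {R : Matrix n m α} (hR : Rᴴ * R = 1) (X Z : Matrix m p α) (Y : Matrix m q α) :
    (1 - R * X * (R * Z)ᴴ) * (R * Y) = R * ((1 - X * Zᴴ) * Y) := by
  calc
    (1 - R * X * (R * Z)ᴴ) * (R * Y) = R * Y - R * X * ((R * Z)ᴴ * (R * Y)) := by
      rw [Matrix.sub_mul, Matrix.one_mul, Matrix.mul_assoc (R * X)]
    _ = R * Y - R * X * (Zᴴ * Y) := by
      rw [conjTranspose_mul_mul_mul_of_conjTranspose_mul_self_eq_one hR]
    _ = R * ((1 - X * Zᴴ) * Y) := by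
      simp only [Matrix.sub_mul, Matrix.mul_sub, Matrix.one_mul, Matrix.mul_assoc]

/-- `Ring.inverse` replaces the matrix inverse so that noncommutative scalars, such as the
quaternions, are allowed. -/
theorem nested_grassmann_principal_angle_matrix_eq_general [DecidableEq p]
    {R : Matrix n m α} (hR : Rᴴ * R = 1) {X Y : Matrix m p α} (hXY : IsUnit (Xᴴ * Y)) :
    IsUnit ((R * X)ᴴ * (R * Y)) ∧
      (1 - R * X * (R * X)ᴴ) * (R * Y) * Ring.inverse ((R * X)ᴴ * (R * Y)) =
        R * ((1 - X * Xᴴ) * Y * Ring.inverse (Xᴴ * Y)) := by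
  rw [conjTranspose_mul_mul_mul_of_conjTranspose_mul_self_eq_one hR,
    one_sub_mul_mul_conjTranspose_mul_mul_of_conjTranspose_mul_self_eq_one hR]
  exact ⟨hXY, Matrix.mul_assoc _ _ _⟩

end Isometry

/-- For `R` an `n × m` real matrix with orthonormal columns
(`Rᵀ * R = 1`) and `X, Y` real `m × p` matrices with `Xᵀ * Y` invertible,
`(Iₙ − (RX)(RX)ᵀ)(RY)((RX)ᵀ(RY))⁻¹ = R ((Iₘ − XXᵀ)Y(XᵀY)⁻¹)`. -/
theorem nested_grassmann_principal_angle_matrix_eq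
    {n m p : ℕ} (R : Matrix (Fin n) (Fin m) ℝ) (hR : Rᵀ * R = 1)
    (X Y : Matrix (Fin m) (Fin p) ℝ) (hXY : IsUnit (Xᵀ * Y)) :
    (1 - (R * X) * (R * X)ᵀ) * (R * Y) * ((R * X)ᵀ * (R * Y))⁻¹ =
      R * ((1 - X * Xᵀ) * Y * (Xᵀ * Y)⁻¹) := by
  simp only [← conjTranspose_eq_transpose_of_trivial, nonsing_inv_eq_ringInverse] at hR hXY ⊢
  exact (nested_grassmann_principal_angle_matrix_eq_general hR hXY).2
end

section
/- Let R be a real n×m matrix with orthonormal columns (RᵀR = Iₘ), and let X, Y be real m×p matrices such that XᵀY is invertible. Set M = (Iₘ − XXᵀ)Y(XᵀY)⁻¹ and M_R = (Iₙ − (RX)(RX)ᵀ)(RY)((RX)ᵀ(RY))⁻¹. Then M_Rᵀ M_R = Mᵀ M; in particular M_R and M have the same singular values, so the principal angles between span(RX) and span(RY) equal those between span(X) and span(Y). (Core of Proposition 1: for B = 0 the embedding ι_m is isometric.) -/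
open Matrix

/-!
A matrix `R` with orthonormal columns preserves the products `Aᴴ * B`, so the projections onto the
orthogonal complements of the spans of `R * X` and `X` are intertwined by `R`. The matrix carrying
the tangents of the principal angles is therefore merely multiplied by `R` on the left, and its Gram
matrix is again of the form `Aᴴ * B`.
-/

section Isometry

variable {𝕜 m n p q : Type*} [Fintype m] [Fintype n] [DecidableEq m]

theorem conjTranspose_mul_mul_of_isometry [Semiring 𝕜] [StarRing 𝕜]
    {R : Matrix n m 𝕜} (hR : Rᴴ * R = 1) (A : Matrix m p 𝕜) (B : Matrix m q 𝕜) :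
    (R * A)ᴴ * (R * B) = Aᴴ * B := by
  calc
    (R * A)ᴴ * (R * B) = Aᴴ * (Rᴴ * R) * B := by
      simp only [conjTranspose_mul, Matrix.mul_assoc]
    _ = Aᴴ * B := by rw [hR, Matrix.mul_one]

variable [DecidableEq n] [Fintype p] [Ring 𝕜] [StarRing 𝕜]

theorem one_sub_mul_conjTranspose_mul_of_isometry
    {R : Matrix n m 𝕜} (hR : Rᴴ * R = 1) (X : Matrix m p 𝕜) (Y : Matrix m q 𝕜) :
    (1 - (R * X) * (R * X)ᴴ) * (R * Y) = R * ((1 - X * Xᴴ) * Y) := by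
  calc
    (1 - (R * X) * (R * X)ᴴ) * (R * Y) = R * Y - R * X * ((R * X)ᴴ * (R * Y)) := by
      rw [Matrix.sub_mul, Matrix.one_mul, Matrix.mul_assoc (R * X)]
    _ = R * Y - R * X * (Xᴴ * Y) := by
      rw [conjTranspose_mul_mul_of_isometry hR]
    _ = R * ((1 - X * Xᴴ) * Y) := by
      simp only [Matrix.sub_mul, Matrix.mul_sub, Matrix.one_mul, Matrix.mul_assoc]

variable [DecidableEq p]

/-- The matrix `(1 - X Xᴴ) Y (Xᴴ Y)⁻¹`. When `X` has orthonormal columns, its singular values over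
`ℝ` or `ℂ` are the tangents of the principal angles between the column spans of `X` and `Y`.
Taking `Xᴴ * Y` to be `Invertible` avoids the junk value of the matrix inverse and makes sense over
noncommutative rings such as the quaternions. -/
def principalTangent (X Y : Matrix m p 𝕜) [Invertible (Xᴴ * Y)] : Matrix m p 𝕜 :=
  (1 - X * Xᴴ) * Y * ⅟(Xᴴ * Y)

theorem principalTangent_isometry_mul {R : Matrix n m 𝕜} (hR : Rᴴ * R = 1) (X Y : Matrix m p 𝕜)
    [Invertible (Xᴴ * Y)] [Invertible ((R * X)ᴴ * (R * Y))] :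
    principalTangent (R * X) (R * Y) = R * principalTangent X Y := by
  have inverses_eq : ⅟((R * X)ᴴ * (R * Y)) = ⅟(Xᴴ * Y) :=
    invertible_unique _ _ (conjTranspose_mul_mul_of_isometry hR X Y)
  rw [principalTangent, principalTangent, inverses_eq,
    one_sub_mul_conjTranspose_mul_of_isometry hR, Matrix.mul_assoc R]

theorem nested_grassmann_gram_matrix_eq_general
    {R : Matrix n m 𝕜} (hR : Rᴴ * R = 1) (X Y : Matrix m p 𝕜)
    [Invertible (Xᴴ * Y)] [Invertible ((R * X)ᴴ * (R * Y))] :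
    (principalTangent (R * X) (R * Y))ᴴ * principalTangent (R * X) (R * Y) =
      (principalTangent X Y)ᴴ * principalTangent X Y := by
  rw [principalTangent_isometry_mul hR, conjTranspose_mul_mul_of_isometry hR]

end Isometry

/-- With `M = (I − XXᵀ)Y(XᵀY)⁻¹` and
`M_R = (I − (RX)(RX)ᵀ)(RY)((RX)ᵀ(RY))⁻¹`, one has `M_Rᵀ M_R = Mᵀ M`,
so the singular values (hence the principal angles) agree. -/
theorem nested_grassmann_gram_matrix_eq
    {n m p : ℕ} (R : Matrix (Fin n) (Fin m) ℝ) (hR : Rᵀ * R = 1)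
    (X Y : Matrix (Fin m) (Fin p) ℝ) (hXY : IsUnit (Xᵀ * Y)) :
    ((1 - (R * X) * (R * X)ᵀ) * (R * Y) * ((R * X)ᵀ * (R * Y))⁻¹)ᵀ *
        ((1 - (R * X) * (R * X)ᵀ) * (R * Y) * ((R * X)ᵀ * (R * Y))⁻¹) =
      ((1 - X * Xᵀ) * Y * (Xᵀ * Y)⁻¹)ᵀ * ((1 - X * Xᵀ) * Y * (Xᵀ * Y)⁻¹) := by
  simp only [← conjTranspose_eq_transpose_of_trivial] at hR hXY ⊢
  let xyInvertible : Invertible (Xᴴ * Y) := hXY.invertible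
  let _ : Invertible ((R * X)ᴴ * (R * Y)) :=
    xyInvertible.copy _ (conjTranspose_mul_mul_of_isometry hR X Y)
  simpa only [principalTangent, invOf_eq_nonsing_inv] using
    nested_grassmann_gram_matrix_eq_general hR X Y
end
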